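/- Let A = ⊕_{i∈ℤ} A_i be a ℤ-graded ring with A_i = 0 for all i < 0, and assume the degree-zero part A_0 is an artinian ring. Then the following four quantities coincide: the left global dimension of A; the supremum of the projective dimensions of the graded simple left A-modules; the right global dimension of A; and the supremum of the projective dimensions of the graded simple right A-modules. -/

import Mathlib

/-!
Statement 0. Let `A = ⊕_{i∈ℤ} A_i` be a ℤ-graded ring with `A_i = 0` for `i < 0` and with
artinian degree-zero part `A_0`.  Then the left global dimension of `A`, the supremum of the
projective dimensions of the graded simple left `A`-modules, the right global dimension of `A`,
and the supremum of the projective dimensions of the graded simple right `A`-modules all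
coincide.
-/

universe u

open DirectSum

section ProjDim

/-- `pdLE R n M` means `M` admits a projective resolution of length at most `n`
(in the category of all `R`-modules). -/
def pdLE (R : Type u) [Ring R] : ℕ → ∀ (M : Type u) [AddCommGroup M] [Module R M], Prop
  | 0, M, _, _ => Module.Projective R M
  | n+1, M, _, _ => ∃ (P : Type u) (_ : AddCommGroup P) (_ : Module R P)
      (f : P →ₗ[R] M), Module.Projective R P ∧ Function.Surjective f ∧
      pdLE R n ↥(LinearMap.ker f)

/-- The projective dimension of a module, as an element of `ℕ∞` (`⊤` if no finite
projective resolution exists). -/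
noncomputable def projDim (R : Type u) [Ring R] (M : Type u) [AddCommGroup M]
    [Module R M] : ℕ∞ :=
  ⨅ (n : ℕ) (_ : pdLE R n M), (n : ℕ∞)

/-- The (left) global dimension of a ring: the supremum of the projective dimensions of all
left modules.  (The right global dimension of `A` is `globalDim Aᵐᵒᵖ`.) -/
noncomputable def globalDim (R : Type u) [Ring R] : ℕ∞ :=
  ⨆ (M : ModuleCat.{u} R), projDim R M

end ProjDim

section Graded

variable (A : Type u) [Ring A] (𝒜 : ℤ → AddSubgroup A)

/-- A grading `ℳ` on a left `A`-module `M` compatible with the grading `𝒜` on `A`: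
`M = ⊕_j ℳ j` and `𝒜 i • ℳ j ⊆ ℳ (i + j)`. -/
def IsGradedModule (M : Type u) [AddCommGroup M] [Module A M]
    (ℳ : ℤ → AddSubgroup M) : Prop :=
  DirectSum.IsInternal ℳ ∧
    ∀ (i j : ℤ) (a : A) (m : M), a ∈ 𝒜 i → m ∈ ℳ j → a • m ∈ ℳ (i + j)

/-- A grading on a right `A`-module (= left `Aᵐᵒᵖ`-module): `ℳ j • 𝒜 i ⊆ ℳ (j + i)`. -/
def IsGradedRightModule (M : Type u) [AddCommGroup M] [Module Aᵐᵒᵖ M]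
    (ℳ : ℤ → AddSubgroup M) : Prop :=
  DirectSum.IsInternal ℳ ∧
    ∀ (i j : ℤ) (a : A) (m : M), a ∈ 𝒜 i → m ∈ ℳ j → (MulOpposite.op a) • m ∈ ℳ (j + i)

/-- A submodule `p` is graded (w.r.t. the grading `ℳ`) if it is the (internal direct) sum of
its homogeneous parts `p ∩ ℳ j`. -/
def IsGradedSubmodule {R : Type*} [Ring R] {M : Type u} [AddCommGroup M] [Module R M]
    (ℳ : ℤ → AddSubgroup M) (p : Submodule R M) : Prop :=
  p.toAddSubgroup = ⨆ j : ℤ, (p.toAddSubgroup ⊓ ℳ j)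

/-- A graded-simple left `A`-module: a nonzero graded module whose only graded submodules
are `⊥` and `⊤`. -/
def IsGradedSimple (M : Type u) [AddCommGroup M] [Module A M]
    (ℳ : ℤ → AddSubgroup M) : Prop :=
  IsGradedModule A 𝒜 M ℳ ∧ Nontrivial M ∧
    ∀ p : Submodule A M, IsGradedSubmodule ℳ p → p = ⊥ ∨ p = ⊤

/-- A graded-simple right `A`-module. -/
def IsGradedSimpleRight (M : Type u) [AddCommGroup M] [Module Aᵐᵒᵖ M]
    (ℳ : ℤ → AddSubgroup M) : Prop :=
  IsGradedRightModule A 𝒜 M ℳ ∧ Nontrivial M ∧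
    ∀ p : Submodule Aᵐᵒᵖ M, IsGradedSubmodule ℳ p → p = ⊥ ∨ p = ⊤

end Graded

section FreeGraded

open GradedRing

variable {R : Type u} [Ring R] (𝒜 : ℤ → AddSubgroup R) [GradedRing 𝒜]

lemma GradedRing.proj_of_mem {i : ℤ} {a : R} (ha : a ∈ 𝒜 i) (j : ℤ) :
    proj 𝒜 j a = if i = j then a else 0 := by
  rw [proj_apply]
  split_ifs with h
  · subst h; exact DirectSum.decompose_of_mem_same 𝒜 ha
  · exact DirectSum.decompose_of_mem_ne 𝒜 ha h

lemma GradedRing.proj_mem (i : ℤ) (a : R) : proj 𝒜 i a ∈ 𝒜 i := by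
  rw [proj_apply]; exact SetLike.coe_mem _

lemma GradedRing.proj_proj (i j : ℤ) (a : R) :
    proj 𝒜 i (proj 𝒜 j a) = if j = i then proj 𝒜 j a else 0 :=
  proj_of_mem 𝒜 (proj_mem 𝒜 j a) i

lemma GradedRing.proj_eq_zero_of_neg (hneg : ∀ i : ℤ, i < 0 → 𝒜 i = ⊥) {i : ℤ} (hi : i < 0)
    (a : R) : proj 𝒜 i a = 0 := by
  have := proj_mem 𝒜 i a
  rwa [hneg i hi, AddSubgroup.mem_bot] at this

lemma GradedRing.exists_sum_proj (a : R) :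
    ∃ s : Finset ℤ, (∀ i ∉ s, proj 𝒜 i a = 0) ∧ ∑ i ∈ s, proj 𝒜 i a = a := by
  classical
  refine ⟨(DirectSum.decompose 𝒜 a).support, fun i hi => ?_, DirectSum.sum_support_decompose 𝒜 a⟩
  by_contra h
  exact hi ((mem_support_iff 𝒜 a i).2 h)

lemma GradedRing.proj_proj_mul (i j : ℤ) (a b : R) :
    proj 𝒜 j (proj 𝒜 i a * b) = proj 𝒜 i a * proj 𝒜 (j - i) b := by
  have := DirectSum.coe_decompose_mul_add_of_left_mem 𝒜 (j := j - i) (b := b) (proj_mem 𝒜 i a)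
  rwa [add_sub_cancel] at this

lemma GradedRing.proj_one (j : ℤ) : proj 𝒜 j (1 : R) = if 0 = j then 1 else 0 :=
  proj_of_mem 𝒜 SetLike.GradedOne.one_mem j

variable {ι : Type*} (d : ι → ℤ)

/-- The degree `j` component of an element of the graded free module on generators `e_l`
of degree `d l`. -/
noncomputable def freeProj (j : ℤ) : (ι →₀ R) →+ (ι →₀ R) :=
  Finsupp.liftAddHom fun l => (Finsupp.singleAddHom l).comp (proj 𝒜 (j - d l))

lemma freeProj_single (j : ℤ) (l : ι) (a : R) :
    freeProj 𝒜 d j (Finsupp.single l a) = Finsupp.single l (proj 𝒜 (j - d l) a) := by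
  simp [freeProj]

lemma freeProj_apply (j : ℤ) (x : ι →₀ R) (l : ι) :
    freeProj 𝒜 d j x l = proj 𝒜 (j - d l) (x l) := by
  classical
  induction x using Finsupp.induction_linear with
  | zero => simp
  | add x y hx hy => simp only [map_add, Finsupp.add_apply, hx, hy]
  | single m a =>
    rw [freeProj_single, Finsupp.single_apply, Finsupp.single_apply]
    split_ifs with h
    · rw [h]
    · rw [map_zero]

lemma freeProj_freeProj (i j : ℤ) (x : ι →₀ R) :
    freeProj 𝒜 d i (freeProj 𝒜 d j x) = if j = i then freeProj 𝒜 d j x else 0 := by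
  ext l
  rw [freeProj_apply, freeProj_apply, proj_proj]
  by_cases h : j = i
  · subst h; simp [freeProj_apply]
  · rw [if_neg h, if_neg (by omega)]; rfl

lemma exists_sum_freeProj (x : ι →₀ R) :
    ∃ s : Finset ℤ, (∀ i ∉ s, freeProj 𝒜 d i x = 0) ∧ ∑ i ∈ s, freeProj 𝒜 d i x = x := by
  classical
  choose s hs hs' using fun l => exists_sum_proj 𝒜 (x l)
  have key : ∀ l, ∀ t : Finset ℤ, s l ⊆ t → ∑ i ∈ t, proj 𝒜 i (x l) = x l := fun l t ht => by
    rw [← Finset.sum_subset ht fun i _ hi => hs l i hi, hs']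
  have hzero : ∀ i ∉ x.support.biUnion fun l => (s l).image (· + d l),
      freeProj 𝒜 d i x = 0 := by
    intro i hi
    ext l
    rw [freeProj_apply, Finsupp.zero_apply]
    by_cases hl : x l = 0
    · rw [hl, map_zero]
    · refine hs l _ fun h => hi (Finset.mem_biUnion.2 ⟨l, Finsupp.mem_support_iff.2 hl, ?_⟩)
      exact Finset.mem_image.2 ⟨_, h, by simp⟩
  refine ⟨x.support.biUnion fun l => (s l).image (· + d l), hzero, ?_⟩
  ext l
  rw [Finsupp.finsetSum_apply]
  simp only [freeProj_apply]
  by_cases hl : x l = 0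
  · simp [hl]
  · refine Eq.trans ?_
      (key l ((x.support.biUnion fun l => (s l).image (· + d l)).image (· - d l)) ?_)
    · rw [Finset.sum_image (by intro a _ b _ h; simpa using h)]
    · intro i hi
      refine Finset.mem_image.2 ⟨i + d l, Finset.mem_biUnion.2 ⟨l, by simpa using hl, ?_⟩, by simp⟩
      exact Finset.mem_image_of_mem _ hi

lemma eq_zero_of_freeProj_eq_zero {x : ι →₀ R} (h : ∀ j, freeProj 𝒜 d j x = 0) : x = 0 := by
  obtain ⟨s, -, hs⟩ := exists_sum_freeProj 𝒜 d x
  rw [← hs]; exact Finset.sum_eq_zero fun i _ => h i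

lemma freeProj_proj_smul (i j : ℤ) (a : R) (x : ι →₀ R) :
    freeProj 𝒜 d j (proj 𝒜 i a • x) = proj 𝒜 i a • freeProj 𝒜 d (j - i) x := by
  ext l
  rw [freeProj_apply, Finsupp.smul_apply, Finsupp.smul_apply, freeProj_apply, smul_eq_mul,
    smul_eq_mul, proj_proj_mul]
  congr 2
  ring_nf

lemma freeProj_smul {s : Finset ℤ} {a : R} (hs : ∑ i ∈ s, proj 𝒜 i a = a) (j : ℤ)
    (x : ι →₀ R) :
    freeProj 𝒜 d j (a • x) = ∑ i ∈ s, proj 𝒜 i a • freeProj 𝒜 d (j - i) x := by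
  conv_lhs => rw [← hs, Finset.sum_smul, map_sum]
  exact Finset.sum_congr rfl fun i _ => freeProj_proj_smul 𝒜 d i j a x

lemma freeProj_smul_freeProj (i j : ℤ) (a : R) (x : ι →₀ R) :
    freeProj 𝒜 d j (a • freeProj 𝒜 d i x) = proj 𝒜 (j - i) a • freeProj 𝒜 d i x := by
  obtain ⟨s, hs0, hs⟩ := exists_sum_proj 𝒜 a
  rw [freeProj_smul 𝒜 d hs]
  simp only [freeProj_freeProj]
  by_cases h : j - i ∈ s
  · rw [Finset.sum_eq_single_of_mem _ h fun k _ hk => by rw [if_neg (by omega), smul_zero],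
      if_pos (by omega)]
  · rw [hs0 _ h, zero_smul]
    refine Finset.sum_eq_zero fun k hk => ?_
    rw [if_neg (by rintro rfl; apply h; simpa using hk), smul_zero]

/-- The elements of the graded free module all of whose components have degree at most `j`. -/
noncomputable def freeLE (j : ℤ) : AddSubgroup (ι →₀ R) :=
  ⨅ k : {k : ℤ // j < k}, (freeProj 𝒜 d k).ker

variable {d} in
lemma mem_freeLE {j : ℤ} {x : ι →₀ R} :
    x ∈ freeLE 𝒜 d j ↔ ∀ k, j < k → freeProj 𝒜 d k x = 0 := by
  simp [freeLE, AddSubgroup.mem_iInf, AddMonoidHom.mem_ker]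

lemma freeLE_mono {i j : ℤ} (h : i ≤ j) : freeLE 𝒜 d i ≤ freeLE 𝒜 d j := fun _ hx =>
  (mem_freeLE 𝒜).2 fun k hk => (mem_freeLE 𝒜).1 hx k (by omega)

lemma freeProj_mem_freeLE (j : ℤ) (x : ι →₀ R) : freeProj 𝒜 d j x ∈ freeLE 𝒜 d j :=
  (mem_freeLE 𝒜).2 fun k hk => by rw [freeProj_freeProj, if_neg (by omega)]

lemma mem_freeLE_sub_one {j : ℤ} {x : ι →₀ R} (hx : x ∈ freeLE 𝒜 d j)
    (h : freeProj 𝒜 d j x = 0) : x ∈ freeLE 𝒜 d (j - 1) :=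
  (mem_freeLE 𝒜).2 fun k hk => by
    rcases eq_or_ne k j with rfl | hkj
    · exact h
    · exact (mem_freeLE 𝒜).1 hx k (by omega)

lemma exists_mem_freeLE (x : ι →₀ R) : ∃ n : ℕ, x ∈ freeLE 𝒜 d n := by
  obtain ⟨s, hs, -⟩ := exists_sum_freeProj 𝒜 d x
  obtain ⟨M, hM⟩ := s.bddAbove
  refine ⟨M.toNat, (mem_freeLE 𝒜).2 fun k hk => hs k fun h => ?_⟩
  have := hM h
  omega

lemma proj_smul_mem_freeLE {i j k : ℤ} (hk : i + j ≤ k) (a : R) {x : ι →₀ R}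
    (hx : x ∈ freeLE 𝒜 d j) :
    proj 𝒜 i a • x ∈ freeLE 𝒜 d k :=
  (mem_freeLE 𝒜).2 fun m hm => by
    rw [freeProj_proj_smul, (mem_freeLE 𝒜).1 hx _ (by omega), smul_zero]

section Nonneg

variable {𝒜 d} (hneg : ∀ i : ℤ, i < 0 → 𝒜 i = ⊥) (hd : ∀ l, 0 ≤ d l)
include hneg hd

lemma freeProj_eq_zero_of_neg {j : ℤ} (hj : j < 0) (x : ι →₀ R) : freeProj 𝒜 d j x = 0 := by
  ext l
  rw [freeProj_apply, proj_eq_zero_of_neg 𝒜 hneg (by linarith [hd l])]; rfl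

lemma eq_zero_of_mem_freeLE_neg {j : ℤ} (hj : j < 0) {x : ι →₀ R} (hx : x ∈ freeLE 𝒜 d j) :
    x = 0 :=
  eq_zero_of_freeProj_eq_zero 𝒜 d fun k => by
    rcases lt_or_ge k 0 with hk | hk
    · exact freeProj_eq_zero_of_neg hneg hd hk x
    · exact (mem_freeLE 𝒜).1 hx k (by omega)

end Nonneg

/-- The submodule spanned by the leading forms of the elements of `L`. -/
noncomputable def leadingForms (L : Submodule R (ι →₀ R)) : Submodule R (ι →₀ R) where
  carrier := {x | ∀ j, ∃ y ∈ L, y ∈ freeLE 𝒜 d j ∧ freeProj 𝒜 d j y = freeProj 𝒜 d j x}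
  zero_mem' j := ⟨0, L.zero_mem, zero_mem _, rfl⟩
  add_mem' {x x'} hx hx' j := by
    obtain ⟨y, h1, h2, h3⟩ := hx j
    obtain ⟨y', h1', h2', h3'⟩ := hx' j
    exact ⟨y + y', L.add_mem h1 h1', add_mem h2 h2', by rw [map_add, map_add, h3, h3']⟩
  smul_mem' a x hx j := by
    obtain ⟨s, -, hs⟩ := exists_sum_proj 𝒜 a
    choose y h1 h2 h3 using hx
    refine ⟨∑ i ∈ s, proj 𝒜 i a • y (j - i), sum_mem fun i _ => L.smul_mem _ (h1 _),
      sum_mem fun i _ => proj_smul_mem_freeLE 𝒜 d (by omega) a (h2 _), ?_⟩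
    rw [freeProj_smul 𝒜 d hs, map_sum]
    refine Finset.sum_congr rfl fun i _ => ?_
    rw [freeProj_proj_smul, h3]

variable {d} in
lemma mem_leadingForms {L : Submodule R (ι →₀ R)} {x : ι →₀ R} :
    x ∈ leadingForms 𝒜 d L ↔
      ∀ j, ∃ y ∈ L, y ∈ freeLE 𝒜 d j ∧ freeProj 𝒜 d j y = freeProj 𝒜 d j x := Iff.rfl

lemma freeProj_mem_leadingForms {L : Submodule R (ι →₀ R)} {j : ℤ} {x : ι →₀ R} (hx : x ∈ L)
    (hx' : x ∈ freeLE 𝒜 d j) : freeProj 𝒜 d j x ∈ leadingForms 𝒜 d L := fun k => by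
  rw [freeProj_freeProj]
  split_ifs with h
  · subst h; exact ⟨x, hx, hx', rfl⟩
  · exact ⟨0, L.zero_mem, zero_mem _, map_zero _⟩

/-- A linear map of graded free modules sending generators of degree `j` to elements of
filtration degree `j` is filtered, and its associated graded map sends each generator to its
leading form. -/
lemma freeProj_linearCombination {κ : Type*} (e : κ → ℤ) (u : κ → ι →₀ R) (j : ℤ) (x : κ →₀ R) :
    freeProj 𝒜 d j (Finsupp.linearCombination R (fun l => freeProj 𝒜 d (e l) (u l)) x) =
      Finsupp.linearCombination R (fun l => freeProj 𝒜 d (e l) (u l)) (freeProj 𝒜 e j x) := by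
  induction x using Finsupp.induction_linear with
  | zero => simp
  | add x y hx hy => simp only [map_add, hx, hy]
  | single l a =>
    rw [freeProj_single, Finsupp.linearCombination_single, Finsupp.linearCombination_single,
      freeProj_smul_freeProj]

lemma linearCombination_mem_freeLE {κ : Type*} (e : κ → ℤ) (u : κ → ι →₀ R)
    (hu : ∀ l, u l ∈ freeLE 𝒜 d (e l)) {j : ℤ} {x : κ →₀ R} (hx : x ∈ freeLE 𝒜 e j) :
    Finsupp.linearCombination R u x ∈ freeLE 𝒜 d j ∧
    freeProj 𝒜 d j (Finsupp.linearCombination R u x) =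
      freeProj 𝒜 d j
        (Finsupp.linearCombination R (fun l => freeProj 𝒜 d (e l) (u l)) x) := by
  have key : ∀ l, x l • u l ∈ freeLE 𝒜 d j ∧
      freeProj 𝒜 d j (x l • u l) = freeProj 𝒜 d j (x l • freeProj 𝒜 d (e l) (u l)) := by
    intro l
    have hxl : ∀ i, j - e l < i → proj 𝒜 i (x l) = 0 := fun i hi => by
      have := DFunLike.congr_fun ((mem_freeLE 𝒜).1 hx (i + e l) (by omega)) l
      rwa [freeProj_apply, add_sub_cancel_right] at this
    obtain ⟨s, hs0, hs⟩ := exists_sum_proj 𝒜 (x l)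
    constructor
    · rw [← hs, Finset.sum_smul]
      refine sum_mem fun i _ => ?_
      by_cases hi : j - e l < i
      · rw [hxl i hi, zero_smul]; exact zero_mem _
      · exact proj_smul_mem_freeLE 𝒜 d (by omega) _ (hu l)
    · rw [freeProj_smul_freeProj, freeProj_smul 𝒜 d hs]
      by_cases h : j - e l ∈ s
      · rw [Finset.sum_eq_single_of_mem _ h, sub_sub_cancel]
        intro i _ hi
        rcases lt_or_gt_of_ne hi with h' | h'
        · rw [(mem_freeLE 𝒜).1 (hu l) _ (by omega), smul_zero]
        · rw [hxl i h', zero_smul]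
      · rw [hs0 _ h, zero_smul]
        refine Finset.sum_eq_zero fun i hi => ?_
        rcases lt_trichotomy i (j - e l) with h' | h' | h'
        · rw [(mem_freeLE 𝒜).1 (hu l) _ (by omega), smul_zero]
        · exact absurd (h' ▸ hi) h
        · rw [hxl i h', zero_smul]
  simp only [Finsupp.linearCombination_apply, Finsupp.sum, map_sum]
  exact ⟨sum_mem fun l _ => (key l).1, Finset.sum_congr rfl fun l _ => (key l).2⟩

end FreeGraded

section Retraction

open GradedRing

variable {R : Type u} [Ring R]

lemma exists_linearCombination_sub_mem_smul {ι : Type*} (I : Ideal R) [I.IsTwoSided]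
    [IsSemisimpleRing (R ⧸ I)] (H : Submodule R (ι →₀ R))
    (hH : ∀ x ∈ H, x ∈ I • (⊤ : Submodule R (ι →₀ R)) → x ∈ I • H) :
    ∃ h : ι → ι →₀ R, (∀ l, h l ∈ H) ∧
      ∀ x ∈ H, Finsupp.linearCombination R h x - x ∈ I • H := by
  set P : Submodule R (ι →₀ R) := I • ⊤ with hP
  have htor : Module.IsTorsionBySet R ((ι →₀ R) ⧸ P) I := by
    rintro x ⟨a, ha⟩
    obtain ⟨y, rfl⟩ := P.mkQ_surjective x
    rw [← map_smul, Submodule.mkQ_apply, Submodule.Quotient.mk_eq_zero]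
    exact Submodule.smul_mem_smul ha trivial
  have hsemi : IsSemisimpleModule R ((ι →₀ R) ⧸ P) := by
    let := htor.module
    exact htor.isSemisimpleModule_iff.1 inferInstance
  obtain ⟨C, hC⟩ := exists_isCompl (H.map P.mkQ)
  set π := (H.map P.mkQ).projectionOnto C hC
  have hπ : ∀ l, ∃ h ∈ H, P.mkQ h = π (P.mkQ (Finsupp.single l 1)) := fun l =>
    (Submodule.mem_map).1 (π (P.mkQ (Finsupp.single l 1))).2
  choose h hH' hh using hπ
  refine ⟨h, hH', fun x hx => hH _ (H.sub_mem ?_ hx) ?_⟩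
  · exact (Finsupp.range_linearCombination R (v := h)).le.trans
      (Submodule.span_le.2 (by rintro _ ⟨l, rfl⟩; exact hH' l)) ⟨x, rfl⟩
  · have key : P.mkQ ∘ₗ Finsupp.linearCombination R h =
        (H.map P.mkQ).subtype ∘ₗ π ∘ₗ P.mkQ := by
      ext l
      simpa using hh l
    rw [← Submodule.Quotient.mk_eq_zero, Submodule.Quotient.mk_sub, sub_eq_zero]
    have h1 := LinearMap.congr_fun key x
    have h2 : π (P.mkQ x) = ⟨P.mkQ x, Submodule.mem_map_of_mem hx⟩ :=
      Submodule.projectionOnto_apply_left hC ⟨P.mkQ x, Submodule.mem_map_of_mem hx⟩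
    simp only [LinearMap.comp_apply, h2] at h1
    exact h1

variable (𝒜 : ℤ → AddSubgroup R) [GradedRing 𝒜] {ι : Type*} (d : ι → ℤ)

lemma freeProj_mem_of_mem_leadingForms {L : Submodule R (ι →₀ R)} {x : ι →₀ R}
    (hx : x ∈ leadingForms 𝒜 d L) (j : ℤ) : freeProj 𝒜 d j x ∈ leadingForms 𝒜 d L := by
  obtain ⟨y, h1, h2, h3⟩ := hx j
  rw [← h3]
  exact freeProj_mem_leadingForms 𝒜 d h1 h2

lemma freeProj_mem_smul {I : Ideal R} (hI : ∀ a ∈ I, ∀ i, proj 𝒜 i a ∈ I)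
    {H : Submodule R (ι →₀ R)} (hH : ∀ x ∈ H, ∀ j, freeProj 𝒜 d j x ∈ H)
    {x : ι →₀ R} (hx : x ∈ I • H) (j : ℤ) : freeProj 𝒜 d j x ∈ I • H := by
  refine Submodule.smul_induction_on hx (fun a ha x hx => ?_) fun x y hx hy => ?_
  · obtain ⟨s, -, hs⟩ := exists_sum_proj 𝒜 a
    rw [freeProj_smul 𝒜 d hs]
    exact sum_mem fun i _ => Submodule.smul_mem_smul (hI a ha i) (hH x hx _)
  · rw [map_add]; exact add_mem hx hy

/-- An element of `I • gr L` lifts to `L`, up to lower order terms, inside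
`I₀ • L_{≤ j} + R • L_{≤ j - 1}`. -/
lemma exists_lift_of_mem_smul_leadingForms (hneg : ∀ i : ℤ, i < 0 → 𝒜 i = ⊥)
    {I : Ideal R} (hI : ∀ a ∈ I, ∀ i, proj 𝒜 i a ∈ I) {L : Submodule R (ι →₀ R)} {j : ℤ}
    (Y : AddSubgroup (ι →₀ R))
    (h₀ : ∀ b ∈ I, b ∈ 𝒜 0 → ∀ x ∈ L, x ∈ freeLE 𝒜 d j → b • x ∈ Y)
    (h₁ : ∀ (a : R), ∀ x ∈ L, x ∈ freeLE 𝒜 d (j - 1) → a • x ∈ Y)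
    {z : ι →₀ R} (hz : z ∈ I • leadingForms 𝒜 d L) :
    ∃ w ∈ Y, w ∈ L ∧ w ∈ freeLE 𝒜 d j ∧ freeProj 𝒜 d j w = freeProj 𝒜 d j z := by
  refine Submodule.smul_induction_on hz (fun a ha x hx => ?_) fun x y hx hy => ?_
  · obtain ⟨s, -, hs⟩ := exists_sum_proj 𝒜 a
    choose y hy hy' hy'' using hx
    refine ⟨∑ i ∈ s, proj 𝒜 i a • y (j - i), sum_mem fun i _ => ?_,
      sum_mem fun i _ => L.smul_mem _ (hy _),
      sum_mem fun i _ => proj_smul_mem_freeLE 𝒜 d (by omega) a (hy' _), ?_⟩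
    · rcases lt_trichotomy i 0 with h | rfl | h
      · rw [proj_eq_zero_of_neg 𝒜 hneg h, zero_smul]; exact zero_mem _
      · exact h₀ _ (hI a ha 0) (proj_mem 𝒜 0 a) _ (hy _) (by simpa using hy' (j - 0))
      · exact h₁ _ _ (hy _) (freeLE_mono 𝒜 d (by omega) (hy' _))
    · rw [freeProj_smul 𝒜 d hs, map_sum]
      exact Finset.sum_congr rfl fun i _ => by rw [freeProj_proj_smul, hy'']
  · obtain ⟨w, h1, h2, h3, h4⟩ := hx
    obtain ⟨w', h1', h2', h3', h4'⟩ := hy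
    exact ⟨w + w', add_mem h1 h1', add_mem h2 h2', add_mem h3 h3', by
      rw [map_add, map_add, h4, h4']⟩

/-- An endomorphism which is the identity on `gr L` modulo `I • gr L` is locally unipotent
on `L`. -/
lemma exists_pow_sub_one_apply_eq_zero (hneg : ∀ i : ℤ, i < 0 → 𝒜 i = ⊥) (hd : ∀ l, 0 ≤ d l)
    {I : Ideal R} (hI : ∀ a ∈ I, ∀ i, proj 𝒜 i a ∈ I) {m : ℕ}
    (hnil : ∀ l : List R, l.length = m → (∀ b ∈ l, b ∈ I ∧ b ∈ 𝒜 0) → l.prod = 0)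
    {L : Submodule R (ι →₀ R)} (ε : Module.End R (ι →₀ R))
    (hε : ∀ x ∈ L, ε x ∈ L)
    (hε' : ∀ j, ∀ x ∈ L, x ∈ freeLE 𝒜 d j →
      ε x ∈ freeLE 𝒜 d j ∧ freeProj 𝒜 d j (ε x) ∈ I • leadingForms 𝒜 d L)
    {x : ι →₀ R} (hx : x ∈ L) : ∃ k, (ε ^ k) x = 0 := by
  have hmono : ∀ {y} (k k'), (ε ^ k) y = 0 → (ε ^ (k' + k)) y = 0 := fun k k' hk => by
    rw [pow_add, Module.End.mul_apply, hk, map_zero]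
  let N : Submodule R (ι →₀ R) :=
    { carrier := {y | ∃ k, (ε ^ k) y = 0}
      zero_mem' := ⟨0, map_zero _⟩
      add_mem' := fun ⟨k, hk⟩ ⟨k', hk'⟩ => ⟨k + k', by
        rw [map_add, hmono k' k hk', add_comm k, hmono k k' hk, add_zero]⟩
      smul_mem' := fun a y ⟨k, hk⟩ => ⟨k, by rw [map_smul, hk, smul_zero]⟩ }
  have hN : ∀ y, y ∈ N ↔ ∃ k, (ε ^ k) y = 0 := fun y => Iff.rfl
  have hN' : ∀ y, ε y ∈ N → y ∈ N := fun y hy => by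
    obtain ⟨k, hk⟩ := (hN _).1 hy
    exact (hN _).2 ⟨k + 1, by rwa [pow_succ, Module.End.mul_apply]⟩
  suffices h : ∀ n : ℕ, ∀ y ∈ L, y ∈ freeLE 𝒜 d ((n : ℤ) - 1) → y ∈ N by
    obtain ⟨n, hn⟩ := exists_mem_freeLE 𝒜 d x
    exact (hN x).1 (h (n + 1) x hx (by simpa using hn))
  intro n
  induction n with
  | zero =>
    intro y _ hy
    rw [eq_zero_of_mem_freeLE_neg hneg hd (by simp) hy]
    exact N.zero_mem
  | succ n ih =>
    simp only [Nat.cast_add, Nat.cast_one, add_sub_cancel_right]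
    have key : ∀ k ≤ m, ∀ l : List R, l.length + k = m → (∀ b ∈ l, b ∈ I ∧ b ∈ 𝒜 0) →
        ∀ y ∈ L, y ∈ freeLE 𝒜 d n → l.prod • y ∈ N := by
      intro k
      induction k with
      | zero =>
        intro _ l hl hb y _ _
        rw [hnil l hl hb, zero_smul]; exact N.zero_mem
      | succ k ihk =>
        intro hk l hl hb y hy hyn
        apply hN'
        rw [map_smul]
        obtain ⟨h1, h2⟩ := hε' n y hy hyn
        obtain ⟨w, hwY, hwL, hwn, hw⟩ := exists_lift_of_mem_smul_leadingForms 𝒜 d hneg hI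
          (N.toAddSubgroup.comap (DistribSMul.toAddMonoidHom (ι →₀ R) l.prod))
          (fun b hbI hb0 x hx hxn => by
            change l.prod • b • x ∈ N
            have := ihk (by omega) (l ++ [b]) (by simp; omega) (by
              intro c hc
              rcases List.mem_append.1 hc with hc | hc
              · exact hb c hc
              · rw [List.mem_singleton.1 hc]; exact ⟨hbI, hb0⟩) x hx hxn
            rwa [List.prod_append, List.prod_singleton, mul_smul] at this)
          (fun a x hx hxn => N.smul_mem _ (N.smul_mem _ (ih x hx hxn))) h2
        have h3 : ε y - w ∈ N := ih _ (L.sub_mem (hε y hy) hwL)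
          (mem_freeLE_sub_one 𝒜 d (sub_mem h1 hwn) (by
            rw [map_sub, hw, freeProj_freeProj, if_pos rfl, sub_self]))
        have h4 := N.add_mem (N.smul_mem l.prod h3) hwY
        change l.prod • (ε y - w) + l.prod • w ∈ N at h4
        rwa [← smul_add, sub_add_cancel] at h4
    intro y hy hyn
    simpa using key m le_rfl [] (by simp) (by simp) y hy hyn

/-- If `gr L ∩ I G ⊆ I gr L`, then `L` is a direct summand of the free module `G`. -/
lemma exists_retraction (hneg : ∀ i : ℤ, i < 0 → 𝒜 i = ⊥) (hd : ∀ l, 0 ≤ d l)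
    {I : Ideal R} [I.IsTwoSided] [IsSemisimpleRing (R ⧸ I)]
    (hI : ∀ a ∈ I, ∀ i, proj 𝒜 i a ∈ I) {m : ℕ}
    (hnil : ∀ l : List R, l.length = m → (∀ b ∈ l, b ∈ I ∧ b ∈ 𝒜 0) → l.prod = 0)
    {L : Submodule R (ι →₀ R)}
    (hL : ∀ x ∈ leadingForms 𝒜 d L, x ∈ I • (⊤ : Submodule R (ι →₀ R)) →
      x ∈ I • leadingForms 𝒜 d L) :
    ∃ κ : (ι →₀ R) →ₗ[R] L, ∀ x : L, κ x = x := by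
  obtain ⟨h, hH, hh⟩ := exists_linearCombination_sub_mem_smul I _ hL
  choose u huL hu hu' using fun l => hH l (d l)
  let ρ := Finsupp.linearCombination R fun l => freeProj 𝒜 d (d l) (u l)
  let ψ : Module.End R (ι →₀ R) := Finsupp.linearCombination R u
  have hψL : ∀ x, ψ x ∈ L := fun x => (Finsupp.range_linearCombination R (v := u)).le.trans
      (Submodule.span_le.2 (by rintro _ ⟨l, rfl⟩; exact huL l)) ⟨x, rfl⟩
  have hρ : ∀ j, ∀ x ∈ leadingForms 𝒜 d L, freeProj 𝒜 d j (ρ x - x) ∈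
      I • leadingForms 𝒜 d L := by
    intro j x hx
    have hx' := freeProj_mem_of_mem_leadingForms 𝒜 d hx j
    have h1 := freeProj_mem_smul 𝒜 d hI
      (fun x hx j => freeProj_mem_of_mem_leadingForms 𝒜 d hx j) (hh _ hx') j
    convert h1 using 1
    rw [map_sub, map_sub, freeProj_freeProj, if_pos rfl]
    congr 1
    rw [freeProj_linearCombination]
    simp only [Finsupp.linearCombination_apply, Finsupp.sum, map_sum]
    refine Finset.sum_congr rfl fun l _ => ?_
    rw [freeProj_apply, hu', freeProj_proj_smul, sub_sub_cancel]
  have hε : ∀ x ∈ L, ∃ k, ((ψ - 1 : Module.End R (ι →₀ R)) ^ k : Module.End R (ι →₀ R)) x = 0 := by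
    intro x hx
    refine exists_pow_sub_one_apply_eq_zero 𝒜 d hneg hd hI hnil (ψ - 1)
      (fun x hx => L.sub_mem (hψL x) hx) ?_ hx
    intro j x hx hxj
    obtain ⟨h1, h2⟩ := linearCombination_mem_freeLE 𝒜 d d u hu hxj
    refine ⟨sub_mem h1 hxj, ?_⟩
    have h3 := hρ j _ (freeProj_mem_leadingForms 𝒜 d hx hxj)
    convert h3 using 1
    rw [LinearMap.sub_apply, map_sub, map_sub, freeProj_freeProj, if_pos rfl]
    congr 1
    exact h2.trans (by rw [freeProj_linearCombination, freeProj_linearCombination,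
      freeProj_freeProj, if_pos rfl])
  have hbij : Function.Bijective ((ψ.codRestrict L hψL).domRestrict L) := by
    constructor
    · rw [injective_iff_map_eq_zero]
      rintro ⟨x, hx⟩ hx0
      have hx1 : ψ x = 0 := congrArg Subtype.val hx0
      obtain ⟨k, hk⟩ := hε x hx
      have : ∀ k, ((ψ - 1 : Module.End R (ι →₀ R)) ^ k : Module.End R (ι →₀ R)) x = 0 → x = 0 := by
        intro k
        induction k with
        | zero => simp
        | succ k ih =>
          intro hk
          refine ih ?_
          rw [pow_succ, Module.End.mul_apply, LinearMap.sub_apply, hx1, zero_sub, map_neg,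
            neg_eq_zero] at hk
          exact hk
      exact Subtype.ext (this k hk)
    · have : ∀ k, ∀ x ∈ L, ((ψ - 1 : Module.End R (ι →₀ R)) ^ k : Module.End R (ι →₀ R)) x = 0 →
        ∃ y ∈ L, ψ y = x := by
        intro k
        induction k with
        | zero => intro x hx h0; exact ⟨0, L.zero_mem, by simpa using Eq.symm h0⟩
        | succ k ih =>
          intro x hx hk
          rw [pow_succ, Module.End.mul_apply] at hk
          obtain ⟨y, hy, hyx⟩ := ih _ (L.sub_mem (hψL x) hx) hk
          exact ⟨x - y, L.sub_mem hx hy, by rw [map_sub, hyx]; simp⟩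
      rintro ⟨x, hx⟩
      obtain ⟨k, hk⟩ := hε x hx
      obtain ⟨y, hy, hyx⟩ := this k x hx hk
      exact ⟨⟨y, hy⟩, Subtype.ext hyx⟩
  refine ⟨(LinearEquiv.ofBijective _ hbij).symm.toLinearMap ∘ₗ ψ.codRestrict L hψL, fun x => ?_⟩
  exact (LinearEquiv.ofBijective _ hbij).symm_apply_apply x

end Retraction

section Dimension

open CategoryTheory Abelian

variable {R : Type u} [Ring R]

lemma pdLE_iff_hasProjectiveDimensionLE (n : ℕ) (M : Type u) [AddCommGroup M] [Module R M] :
    pdLE R n M ↔ HasProjectiveDimensionLE (ModuleCat.of R M) n := by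
  induction n generalizing M with
  | zero =>
    rw [pdLE, IsProjective.iff_projective, projective_iff_hasProjectiveDimensionLE_zero]
  | succ n ih =>
    have key : ∀ (P : Type u) [AddCommGroup P] [Module R P] (f : P →ₗ[R] M),
        Module.Projective R P → Function.Surjective f →
        (pdLE R n ↥(LinearMap.ker f) ↔ HasProjectiveDimensionLE (ModuleCat.of R M) (n + 1)) := by
      intro P _ _ f hP hf
      rw [ih]
      exact (((LinearMap.shortExact_shortComplexKer hf).hasProjectiveDimensionLT_X₃_iff n
        ((IsProjective.iff_projective P).1 hP)).symm)
    constructor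
    · rintro ⟨P, _, _, f, hP, hf, h⟩
      exact (key P f hP hf).1 h
    · intro h
      refine ⟨M →₀ R, inferInstance, inferInstance, Finsupp.linearCombination R id,
        inferInstance, Finsupp.linearCombination_id_surjective R M, ?_⟩
      exact (key _ _ inferInstance (Finsupp.linearCombination_id_surjective R M)).2 h

lemma pdLE.mono {m n : ℕ} (hmn : m ≤ n) {M : Type u} [AddCommGroup M] [Module R M]
    (h : pdLE R m M) : pdLE R n M := by
  rw [pdLE_iff_hasProjectiveDimensionLE] at *
  exact hasProjectiveDimensionLT_of_ge _ (m + 1) _ (by omega)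

lemma pdLE.congr {n : ℕ} {M N : Type u} [AddCommGroup M] [Module R M] [AddCommGroup N]
    [Module R N] (e : M ≃ₗ[R] N) (h : pdLE R n M) : pdLE R n N := by
  rw [pdLE_iff_hasProjectiveDimensionLE] at *
  exact hasProjectiveDimensionLT_of_iso e.toModuleIso _

lemma projDim_le_iff {n : ℕ} {M : Type u} [AddCommGroup M] [Module R M] :
    projDim R M ≤ n ↔ pdLE R n M := by
  refine ⟨fun h => ?_, fun h => iInf₂_le n h⟩
  have h1 : projDim R M < ((n + 1 : ℕ) : ℕ∞) := lt_of_le_of_lt h (by exact_mod_cast n.lt_succ_self)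
  obtain ⟨m, hm⟩ := iInf_lt_iff.1 h1
  obtain ⟨hm, hlt⟩ := iInf_lt_iff.1 hm
  exact hm.mono (by have : m < n + 1 := by exact_mod_cast hlt
                    omega)

lemma globalDim_le_iff {n : ℕ} :
    globalDim R ≤ n ↔ ∀ (M : Type u) [AddCommGroup M] [Module R M], pdLE R n M := by
  rw [globalDim, iSup_le_iff]
  exact ⟨fun h M _ _ => projDim_le_iff.1 (h (ModuleCat.of R M)), fun h M => projDim_le_iff.2 (h M)⟩

lemma ENat.eq_of_forall_natCast_le {x y : ℕ∞} (h : ∀ n : ℕ, x ≤ n ↔ y ≤ n) : x = y :=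
  eq_of_forall_ge_iff fun c => by
    induction c with
    | top => simp
    | coe n => exact h n

variable (R) in
/-- The vanishing of `Ext^(n+1)(M, W)`. -/
def ExtVanishes (W : Type u) [AddCommGroup W] [Module R W] (n : ℕ) (M : Type u)
    [AddCommGroup M] [Module R M] : Prop :=
  ∀ x : Ext.{u} (ModuleCat.of R M) (ModuleCat.of R W) (n + 1), x = 0

variable {W : Type u} [AddCommGroup W] [Module R W] {M N P : Type u}
  [AddCommGroup M] [Module R M] [AddCommGroup N] [Module R N]
  [AddCommGroup P] [Module R P]

lemma ExtVanishes.of_hasInjectiveDimensionLE {n : ℕ}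
    (h : HasInjectiveDimensionLE (ModuleCat.of R W) n) : ExtVanishes R W n M := fun x =>
  x.eq_zero_of_hasInjectiveDimensionLT (n + 1) le_rfl

lemma ExtVanishes.congr {n : ℕ} (e : M ≃ₗ[R] N) (h : ExtVanishes R W n M) :
    ExtVanishes R W n N := fun x => by
  have h1 := h ((Ext.mk₀ e.toModuleIso.hom).comp x (zero_add _))
  have h2 := congrArg (fun y => (Ext.mk₀ e.toModuleIso.inv).comp y (zero_add _)) h1
  simpa only [Ext.mk₀_comp_mk₀_assoc, Iso.inv_hom_id, Ext.mk₀_id_comp, Ext.comp_zero] using h2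

lemma ExtVanishes.ker [Module.Projective R P] {n : ℕ} {f : P →ₗ[R] M}
    (hf : Function.Surjective f) (h : ExtVanishes R W (n + 1) M) :
    ExtVanishes R W n (LinearMap.ker f) := fun x => by
  have hP : Projective (f.shortComplexKer).X₂ := (IsProjective.iff_projective P).1 inferInstance
  obtain ⟨y, hy⟩ := Ext.contravariant_sequence_exact₁ (LinearMap.shortExact_shortComplexKer hf) _ x
    (n₁ := n + 1 + 1) (by omega) (h _)
  rw [← hy, Ext.eq_zero_of_projective y, Ext.comp_zero]

lemma ExtVanishes.exists_extension {f : P →ₗ[R] M}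
    (hf : Function.Surjective f) (h : ExtVanishes R W 0 M) (g : LinearMap.ker f →ₗ[R] W) :
    ∃ g' : P →ₗ[R] W, ∀ x : LinearMap.ker f, g' x = g x := by
  obtain ⟨y, hy⟩ := Ext.contravariant_sequence_exact₁ (LinearMap.shortExact_shortComplexKer hf) _
    (Ext.mk₀ (ModuleCat.ofHom g)) (n₁ := 0 + 1) (by omega) (h _)
  obtain ⟨g', rfl⟩ := Ext.homEquiv₀.symm.surjective y
  rw [Ext.homEquiv₀_symm_apply, Ext.mk₀_comp_mk₀] at hy
  have h2 := Ext.homEquiv₀.symm.injective hy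
  exact ⟨g'.hom, fun x => congrArg (fun k => k.hom x) h2⟩

end Dimension

section Resolution

open GradedRing

variable {R : Type u} [Ring R] (𝒜 : ℤ → AddSubgroup R) [GradedRing 𝒜] {ι : Type u} (d : ι → ℤ)

/-- Generators of a submodule `L` of a graded free module: pairs of a degree `j` and an element
of `L` of filtration degree at most `j`. -/
abbrev FilteredGenerator (L : Submodule R (ι →₀ R)) : Type u :=
  {p : ℕ × (ι →₀ R) // p.2 ∈ L ∧ p.2 ∈ freeLE 𝒜 d p.1}

namespace FilteredGenerator

variable (L : Submodule R (ι →₀ R))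

/-- The degree of a generator. -/
def degree (p : FilteredGenerator 𝒜 d L) : ℤ := p.1.1

/-- The presentation of `L` by its filtered generators. -/
noncomputable def lift : (FilteredGenerator 𝒜 d L →₀ R) →ₗ[R] ι →₀ R :=
  Finsupp.linearCombination R fun p => p.1.2

/-- The presentation of the module of leading forms associated with `lift`. -/
noncomputable def gradedLift : (FilteredGenerator 𝒜 d L →₀ R) →ₗ[R] ι →₀ R :=
  Finsupp.linearCombination R fun p => freeProj 𝒜 d (degree 𝒜 d L p) p.1.2

lemma range_lift : LinearMap.range (lift 𝒜 d L) = L := by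
  rw [lift, Finsupp.range_linearCombination]
  refine le_antisymm (Submodule.span_le.2 ?_) fun x hx => ?_
  · rintro _ ⟨p, rfl⟩; exact p.2.1
  · obtain ⟨n, hn⟩ := exists_mem_freeLE 𝒜 d x
    exact Submodule.subset_span ⟨⟨(n, x), hx, hn⟩, rfl⟩

variable {𝒜 d}

lemma range_gradedLift (hneg : ∀ i : ℤ, i < 0 → 𝒜 i = ⊥) (hd : ∀ l, 0 ≤ d l) :
    LinearMap.range (gradedLift 𝒜 d L) = leadingForms 𝒜 d L := by
  rw [gradedLift, Finsupp.range_linearCombination]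
  refine le_antisymm (Submodule.span_le.2 ?_) fun x hx => ?_
  · rintro _ ⟨p, rfl⟩; exact freeProj_mem_leadingForms 𝒜 d p.2.1 p.2.2
  · obtain ⟨s, -, hs⟩ := exists_sum_freeProj 𝒜 d x
    rw [← hs]
    refine sum_mem fun j _ => ?_
    rcases lt_or_ge j 0 with hj | hj
    · rw [freeProj_eq_zero_of_neg hneg hd hj]; exact zero_mem _
    · lift j to ℕ using hj
      obtain ⟨y, h1, h2, h3⟩ := hx j
      rw [← h3]
      exact Submodule.subset_span ⟨⟨(j, y), h1, h2⟩, rfl⟩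

lemma ker_gradedLift (hneg : ∀ i : ℤ, i < 0 → 𝒜 i = ⊥) (hd : ∀ l, 0 ≤ d l) :
    LinearMap.ker (gradedLift 𝒜 d L) =
      leadingForms 𝒜 (degree 𝒜 d L) (LinearMap.ker (lift 𝒜 d L)) := by
  have hlift : ∀ {j x}, x ∈ freeLE 𝒜 (degree 𝒜 d L) j → lift 𝒜 d L x ∈ freeLE 𝒜 d j ∧
      freeProj 𝒜 d j (lift 𝒜 d L x) = freeProj 𝒜 d j (gradedLift 𝒜 d L x) := fun hx =>
    linearCombination_mem_freeLE 𝒜 d _ _ (fun p => p.2.2) hx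
  have hproj : ∀ j x, freeProj 𝒜 d j (gradedLift 𝒜 d L x) =
      gradedLift 𝒜 d L (freeProj 𝒜 (degree 𝒜 d L) j x) := fun j x =>
    freeProj_linearCombination 𝒜 d _ _ j x
  ext x
  rw [LinearMap.mem_ker, mem_leadingForms]
  constructor
  · intro hx j
    have hq := freeProj_mem_freeLE 𝒜 (degree 𝒜 d L) j x
    obtain ⟨h1, h2⟩ := hlift hq
    rw [← hproj, hx, map_zero, map_zero] at h2
    have hz := mem_freeLE_sub_one 𝒜 d h1 h2
    have hzL : lift 𝒜 d L (freeProj 𝒜 (degree 𝒜 d L) j x) ∈ L :=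
      (range_lift 𝒜 d L).le ⟨_, rfl⟩
    rcases le_or_gt j 0 with hj | hj
    · exact ⟨_, eq_zero_of_mem_freeLE_neg hneg hd (by omega) hz, hq, by
        rw [freeProj_freeProj, if_pos rfl]⟩
    · obtain ⟨k, rfl⟩ : ∃ k : ℕ, j = k + 1 := ⟨(j - 1).toNat, by omega⟩
      rw [add_sub_cancel_right] at hz
      set p : FilteredGenerator 𝒜 d L := ⟨(k, _), hzL, hz⟩ with hp
      have hpk : ∀ i : ℤ, k < i →
          freeProj 𝒜 (degree 𝒜 d L) i (Finsupp.single p 1) = 0 := fun i hi => by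
        rw [freeProj_single, proj_one, if_neg, Finsupp.single_zero]
        change ¬ (0 = i - (k : ℤ))
        omega
      refine ⟨freeProj 𝒜 (degree 𝒜 d L) (k + 1) x - Finsupp.single p 1, ?_, ?_, ?_⟩
      · rw [LinearMap.mem_ker, map_sub, sub_eq_zero, lift, Finsupp.linearCombination_single,
          one_smul]
        rfl
      · exact sub_mem hq ((mem_freeLE 𝒜).2 fun i hi => hpk i (by omega))
      · rw [map_sub, hpk _ (by omega), sub_zero, freeProj_freeProj, if_pos rfl]
  · intro hx
    refine eq_zero_of_freeProj_eq_zero 𝒜 d fun j => ?_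
    obtain ⟨y, h1, h2, h3⟩ := hx j
    rw [hproj, ← h3, ← hproj, ← (hlift h2).2, LinearMap.mem_ker.1 h1, map_zero]

end FilteredGenerator

variable {𝒜 d}

/-- If the finite projective dimension of a quotient of a graded free module by its leading forms
is detected by `W`, then it bounds the projective dimension of the quotient itself. -/
lemma pdLE_quotient_of_extVanishes (hneg : ∀ i : ℤ, i < 0 → 𝒜 i = ⊥)
    {I : Ideal R} [I.IsTwoSided] [IsSemisimpleRing (R ⧸ I)]
    (hI : ∀ a ∈ I, ∀ i, proj 𝒜 i a ∈ I) {m : ℕ}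
    (hnil : ∀ l : List R, l.length = m → (∀ b ∈ l, b ∈ I ∧ b ∈ 𝒜 0) → l.prod = 0)
    {W : Type u} [AddCommGroup W] [Module R W]
    (hW : ∀ {ι : Type u} (H : Submodule R (ι →₀ R)),
      (∀ g : H →ₗ[R] W, ∃ g' : (ι →₀ R) →ₗ[R] W, ∀ x : H, g' x = g x) →
      ∀ x ∈ H, x ∈ I • (⊤ : Submodule R (ι →₀ R)) → x ∈ I • H)
    (n : ℕ) {ι : Type u} {d : ι → ℤ} (hd : ∀ l, 0 ≤ d l) (L : Submodule R (ι →₀ R))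
    (hL : ExtVanishes R W n ((ι →₀ R) ⧸ leadingForms 𝒜 d L)) :
    pdLE R n ((ι →₀ R) ⧸ L) := by
  induction n generalizing ι with
  | zero =>
    obtain ⟨κ, hκ⟩ := exists_retraction 𝒜 d hneg hd hI hnil (L := L) (hW _ fun g => by
      have h := hL.exists_extension (leadingForms 𝒜 d L).mkQ_surjective
        (g ∘ₗ (LinearEquiv.ofEq _ _ (Submodule.ker_mkQ _)).toLinearMap)
      obtain ⟨g', hg'⟩ := h
      exact ⟨g', fun x => hg' ⟨x, by rw [Submodule.ker_mkQ]; exact x.2⟩⟩)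
    refine Module.Projective.of_split
      (L.liftQ (LinearMap.id - L.subtype ∘ₗ κ) fun x hx => ?_) L.mkQ ?_
    · have := hκ ⟨x, hx⟩
      simp only [LinearMap.mem_ker, LinearMap.sub_apply, LinearMap.id_apply,
        LinearMap.comp_apply] at this ⊢
      rw [this, L.subtype_apply, sub_self]
    · ext x
      simp
  | succ n ih =>
    have h1 : ExtVanishes R W n (leadingForms 𝒜 d L) :=
      (hL.ker (leadingForms 𝒜 d L).mkQ_surjective).congr
        (LinearEquiv.ofEq _ _ (Submodule.ker_mkQ _))
    have h2 := ih (d := FilteredGenerator.degree 𝒜 d L) (fun p => Int.natCast_nonneg _)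
      (LinearMap.ker (FilteredGenerator.lift 𝒜 d L)) (h1.congr
        ((LinearEquiv.ofEq _ _ (FilteredGenerator.range_gradedLift L hneg hd).symm).trans
          ((FilteredGenerator.gradedLift 𝒜 d L).quotKerEquivRange.symm.trans
            (Submodule.quotEquivOfEq _ _ (FilteredGenerator.ker_gradedLift L hneg hd)))))
    refine ⟨ι →₀ R, inferInstance, inferInstance, L.mkQ, inferInstance, L.mkQ_surjective,
      h2.congr ((FilteredGenerator.lift 𝒜 d L).quotKerEquivRange.trans
        (LinearEquiv.ofEq _ _ ((FilteredGenerator.range_lift 𝒜 d L).trans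
          (Submodule.ker_mkQ L).symm)))⟩

/-- If `W` has finite injective dimension `n` and detects membership in `I • H`, then all modules
have projective dimension at most `n`. -/
lemma pdLE_of_hasInjectiveDimensionLE (hneg : ∀ i : ℤ, i < 0 → 𝒜 i = ⊥)
    {I : Ideal R} [I.IsTwoSided] [IsSemisimpleRing (R ⧸ I)]
    (hI : ∀ a ∈ I, ∀ i, proj 𝒜 i a ∈ I) {m : ℕ}
    (hnil : ∀ l : List R, l.length = m → (∀ b ∈ l, b ∈ I ∧ b ∈ 𝒜 0) → l.prod = 0)
    {W : Type u} [AddCommGroup W] [Module R W]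
    (hW : ∀ {ι : Type u} (H : Submodule R (ι →₀ R)),
      (∀ g : H →ₗ[R] W, ∃ g' : (ι →₀ R) →ₗ[R] W, ∀ x : H, g' x = g x) →
      ∀ x ∈ H, x ∈ I • (⊤ : Submodule R (ι →₀ R)) → x ∈ I • H)
    {n : ℕ} (h : CategoryTheory.HasInjectiveDimensionLE (ModuleCat.of R W) n)
    (M : Type u) [AddCommGroup M] [Module R M] : pdLE R n M :=
  (pdLE_quotient_of_extVanishes hneg hI hnil hW n (d := fun _ : M => 0) (fun _ => le_rfl)
    (LinearMap.ker (Finsupp.linearCombination R id))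
    (ExtVanishes.of_hasInjectiveDimensionLE h)).congr
      (LinearMap.quotKerEquivOfSurjective _ (Finsupp.linearCombination_id_surjective R M))

end Resolution

section Duality

open MulOpposite CategoryTheory

/-- The character dual of a left `A`-module, as a module over a ring `R` opposite to `A`. -/
def DualModule {R A : Type u} [Ring R] [Ring A] (_e : R ≃+* Aᵐᵒᵖ) (N : Type u) [AddCommGroup N]
    [Module A N] : Type u := N →+ AddCircle (1 : ℚ)

namespace DualModule

variable {R A : Type u} [Ring R] [Ring A] (e : R ≃+* Aᵐᵒᵖ) {N N' : Type u} [AddCommGroup N]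
  [Module A N] [AddCommGroup N'] [Module A N']

instance : AddCommGroup (DualModule e N) := inferInstanceAs (AddCommGroup (N →+ AddCircle (1 : ℚ)))

instance : FunLike (DualModule e N) N (AddCircle (1 : ℚ)) :=
  inferInstanceAs (FunLike (N →+ AddCircle (1 : ℚ)) N (AddCircle (1 : ℚ)))

instance : AddMonoidHomClass (DualModule e N) N (AddCircle (1 : ℚ)) :=
  inferInstanceAs (AddMonoidHomClass (N →+ AddCircle (1 : ℚ)) N (AddCircle (1 : ℚ)))

variable {e} in
@[ext] lemma ext {φ ψ : DualModule e N} (h : ∀ x, φ x = ψ x) : φ = ψ := DFunLike.ext _ _ h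

@[simp] lemma add_apply (φ ψ : DualModule e N) (x : N) : (φ + ψ) x = φ x + ψ x := rfl

@[simp] lemma zero_apply (x : N) : (0 : DualModule e N) x = 0 := rfl

instance : SMul R (DualModule e N) :=
  ⟨fun r φ => AddMonoidHom.comp φ (DistribSMul.toAddMonoidHom N (unop (e r)))⟩

@[simp] lemma smul_apply (r : R) (φ : DualModule e N) (x : N) :
    (r • φ) x = φ (unop (e r) • x) := rfl

instance : Module R (DualModule e N) where
  one_smul φ := by ext; simp
  mul_smul r s φ := by ext; simp [mul_smul]
  smul_zero r := by ext; simp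
  smul_add r φ ψ := by ext; simp
  add_smul r s φ := by ext; simp [add_smul]
  zero_smul φ := by ext; simp

/-- The transpose of a linear map. -/
def map (f : N →ₗ[A] N') : DualModule e N' →ₗ[R] DualModule e N where
  toFun φ := AddMonoidHom.comp φ f.toAddMonoidHom
  map_add' _ _ := rfl
  map_smul' r φ := by
    ext x
    exact congrArg φ (f.map_smul (unop (e r)) x).symm

@[simp] lemma map_apply (f : N →ₗ[A] N') (φ : DualModule e N') (x : N) :
    map e f φ x = φ (f x) := rfl

lemma map_surjective {f : N →ₗ[A] N'} (hf : Function.Injective f) :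
    Function.Surjective (map e f) :=
  CharacterModule.dual_surjective_of_injective (f.restrictScalars ℤ) hf

lemma map_injective {f : N →ₗ[A] N'} (hf : Function.Surjective f) :
    Function.Injective (map e f) := fun φ ψ h => by
  ext x
  obtain ⟨x, rfl⟩ := hf x
  exact DFunLike.congr_fun h x

lemma exact_map {f : N →ₗ[A] N'} (hf : Function.Surjective f) :
    Function.Exact (map e f) (map e (LinearMap.ker f).subtype) := by
  intro φ
  constructor
  · intro h
    have h' : ∀ x, f x = 0 → φ x = 0 := fun x hx => DFunLike.congr_fun h ⟨x, hx⟩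
    refine ⟨(f.toAddMonoidHom.liftOfSurjective hf) ⟨(φ : N →+ AddCircle (1 : ℚ)), h'⟩, ?_⟩
    ext x
    exact AddMonoidHom.liftOfRightInverse_comp_apply f.toAddMonoidHom _
      (Function.rightInverse_surjInv hf) _ x
  · rintro ⟨ψ, rfl⟩
    ext x
    simp

/-- Exchanging the arguments of a balanced pairing. -/
def flip {e : R ≃+* Aᵐᵒᵖ} {e' : A ≃+* Rᵐᵒᵖ} (he : ∀ r, unop (e' (unop (e r))) = r) {X : Type u}
    [AddCommGroup X] [Module R X] (G : N →ₗ[A] DualModule e' X) : X →ₗ[R] DualModule e N where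
  toFun x := AddMonoidHom.mk' (fun s => G s x) fun s t => by rw [map_add]; rfl
  map_add' x y := by ext s; exact map_add (G s) x y
  map_smul' r x := by
    ext s
    change G s (r • x) = G (unop (e r) • s) x
    rw [G.map_smul, smul_apply, he]

@[simp] lemma flip_apply {e : R ≃+* Aᵐᵒᵖ} {e' : A ≃+* Rᵐᵒᵖ}
    (he : ∀ r, unop (e' (unop (e r))) = r) {X : Type u}
    [AddCommGroup X] [Module R X] (G : N →ₗ[A] DualModule e' X) (x : X) (s : N) :
    flip he G x s = G s x := rfl

/-- The ring isomorphism exhibiting `A` as the opposite of `R`. -/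
def symmOp : A ≃+* Rᵐᵒᵖ := (RingEquiv.opOp A).trans (RingEquiv.op e.symm)

lemma unop_symmOp (r : R) : unop (symmOp e (unop (e r))) = r := e.symm_apply_apply r

lemma unop_apply_unop_symmOp (a : A) : unop (e (unop (symmOp e a))) = a :=
  congrArg unop (e.apply_symm_apply (op a))

instance injective [Module.Projective A N] : Module.Injective R (DualModule e N) where
  out X Y _ _ _ _ f hf g := by
    obtain ⟨G, hG⟩ := Module.projective_lifting_property (map (symmOp e) f)
      (flip (unop_apply_unop_symmOp e) g) (map_surjective _ hf)
    refine ⟨flip (unop_symmOp e) G, fun x => ?_⟩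
    ext s
    exact DFunLike.congr_fun (LinearMap.congr_fun hG s) x

lemma hasInjectiveDimensionLE {n : ℕ} (h : pdLE A n N) :
    HasInjectiveDimensionLE (ModuleCat.of R (DualModule e N)) n := by
  induction n generalizing N with
  | zero =>
    rw [pdLE] at h
    exact injective_iff_hasInjectiveDimensionLT_one.1
      ((Module.injective_iff_injective_object R _).1 (injective e))
  | succ n ih =>
    obtain ⟨P, _, _, f, hP, hf, h⟩ := h
    let S : ShortComplex (ModuleCat.{u} R) := ModuleCat.shortComplexOfCompEqZero _ _
      (exact_map e hf).linearMap_comp_eq_zero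
    have hS : S.ShortExact := ModuleCat.shortComplex_shortExact S (exact_map e hf)
      (map_injective e hf) (map_surjective e (LinearMap.ker f).injective_subtype)
    exact (hS.hasInjectiveDimensionLT_X₃_iff n
      ((Module.injective_iff_injective_object R _).1 (injective e))).1 (ih h)

/-- The dual of `A ⧸ J` detects membership in `I • H`, where `I` corresponds to `J`. -/
lemma mem_smul_of_extends {I : Ideal R} {J : Ideal A} [J.IsTwoSided]
    (hIJ : ∀ r, r ∈ I ↔ unop (e r) ∈ J) {G : Type u} [AddCommGroup G] [Module R G]
    (H : Submodule R G)
    (hH : ∀ g : H →ₗ[R] DualModule e (A ⧸ J), ∃ g' : G →ₗ[R] DualModule e (A ⧸ J),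
      ∀ x : H, g' x = g x)
    (x : G) (hx : x ∈ H) (hxI : x ∈ I • (⊤ : Submodule R G)) : x ∈ I • H := by
  by_contra hxH
  have hx0 : (I • (⊤ : Submodule R H)).mkQ ⟨x, hx⟩ ≠ 0 := by
    rw [Ne, Submodule.mkQ_apply, Submodule.Quotient.mk_eq_zero]
    intro h
    have h1 := Submodule.mem_map_of_mem (f := H.subtype) h
    rw [Submodule.map_smul'', Submodule.map_top, Submodule.range_subtype] at h1
    exact hxH h1
  obtain ⟨χ, hχ⟩ := CharacterModule.exists_character_apply_ne_zero_of_ne_zero hx0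
  let χ' : DualModule (symmOp e) H :=
    AddMonoidHom.comp χ (I • (⊤ : Submodule R H)).mkQ.toAddMonoidHom
  have hχ' : ∀ y : H, χ' y = χ ((I • (⊤ : Submodule R H)).mkQ y) := fun _ => rfl
  obtain ⟨g', hg'⟩ := hH (flip (unop_symmOp e) (J.liftQ (LinearMap.toSpanSingleton A _ χ') (by
    intro a ha
    rw [LinearMap.mem_ker, LinearMap.toSpanSingleton_apply]
    ext y
    rw [smul_apply, hχ', zero_apply]
    convert map_zero χ
    rw [Submodule.mkQ_apply, Submodule.Quotient.mk_eq_zero]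
    refine Submodule.smul_mem_smul ((hIJ _).2 ?_) trivial
    rwa [unop_apply_unop_symmOp])))
  have h0 : ∀ y ∈ I • (⊤ : Submodule R G), g' y = 0 := fun y hy => by
    refine Submodule.smul_induction_on hy (fun r hr z _ => ?_) fun y z hy hz => by
      rw [map_add, hy, hz, add_zero]
    ext s
    obtain ⟨a, rfl⟩ := J.mkQ_surjective s
    rw [map_smul, smul_apply, ← map_smul, Submodule.mkQ_apply,
      (Submodule.Quotient.mk_eq_zero J).2, map_zero, zero_apply]
    exact J.mul_mem_right a ((hIJ r).1 hr)
  have h1 := DFunLike.congr_fun (hg' ⟨x, hx⟩) (J.mkQ 1)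
  rw [h0 x hxI, zero_apply, flip_apply, Submodule.mkQ_apply, Submodule.liftQ_apply,
    LinearMap.toSpanSingleton_apply, one_smul] at h1
  exact hχ h1.symm

end DualModule

end Duality

section Simple

open MulOpposite

lemma pdLE_of_isFiniteLength {A : Type u} [Ring A] {J : Ideal A} {n : ℕ}
    (hS : ∀ (S : Type u) [AddCommGroup S] [Module A S], IsSimpleModule A S →
      (∀ a ∈ J, ∀ x : S, a • x = 0) → pdLE A n S)
    {M : Type u} [AddCommGroup M] [Module A M] (hM : IsFiniteLength A M)
    (hJ : ∀ a ∈ J, ∀ x : M, a • x = 0) : pdLE A n M := by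
  induction hM with
  | @of_subsingleton M _ _ _ =>
    have h0 : pdLE A 0 M := Module.Projective.of_free
    exact h0.mono (Nat.zero_le n)
  | @of_simple_quotient M _ _ N hs _ ih =>
    have h1 := ih fun a ha x => Subtype.ext (hJ a ha x)
    have h3 := hS (M ⧸ N) hs fun a ha x => by
      obtain ⟨x, rfl⟩ := N.mkQ_surjective x
      rw [← map_smul, hJ a ha, map_zero]
    replace h1 := h1.congr (LinearEquiv.ofEq _ _ (Submodule.ker_mkQ N).symm)
    rw [pdLE_iff_hasProjectiveDimensionLE] at h1 h3 ⊢
    exact (LinearMap.shortExact_shortComplexKer N.mkQ_surjective).hasProjectiveDimensionLT_X₂ _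
      h1 h3

lemma Ideal.smul_quotient_eq_zero {A : Type u} [Ring A] {J : Ideal A} [J.IsTwoSided] {a : A}
    (ha : a ∈ J) (x : A ⧸ J) : a • x = 0 := by
  obtain ⟨x, rfl⟩ := J.mkQ_surjective x
  rw [← map_smul, Submodule.mkQ_apply, Submodule.Quotient.mk_eq_zero]
  exact J.mul_mem_right x ha

lemma pdLE_quotient_of_isSemisimpleRing {A : Type u} [Ring A] {J : Ideal A} [J.IsTwoSided]
    [IsSemisimpleRing (A ⧸ J)] {n : ℕ}
    (hS : ∀ (S : Type u) [AddCommGroup S] [Module A S], IsSimpleModule A S →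
      (∀ a ∈ J, ∀ x : S, a • x = 0) → pdLE A n S) : pdLE A n (A ⧸ J) := by
  have htor : Module.IsTorsionBySet A (A ⧸ J) J := fun x a => Ideal.smul_quotient_eq_zero a.2 x
  have hsemi : IsSemisimpleModule A (A ⧸ J) := by
    let := htor.module
    exact htor.isSemisimpleModule_iff.1 inferInstance
  have hfin : Module.Finite A (A ⧸ J) := inferInstance
  exact pdLE_of_isFiniteLength hS ((IsSemisimpleModule.finite_tfae.out 0 3).1 hfin)
    fun a ha x => Ideal.smul_quotient_eq_zero ha x

/-- A simple module killed by all homogeneous elements of nonzero degree is graded simple when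
concentrated in degree zero. -/
lemma IsSimpleModule.exists_isGradedSimple {A : Type u} [Ring A] {𝒜 : ℤ → AddSubgroup A}
    {S : Type u} [AddCommGroup S] [Module A S] (h : IsSimpleModule A S)
    (hS : ∀ i ≠ 0, ∀ a ∈ 𝒜 i, ∀ x : S, a • x = 0) :
    ∃ ℳ : ℤ → AddSubgroup S, IsGradedSimple A 𝒜 S ℳ := by
  classical
  refine ⟨fun j => if j = 0 then ⊤ else ⊥, ⟨⟨?_, fun i j a m ha hm => ?_⟩,
    IsSimpleModule.nontrivial A S, fun p _ => eq_bot_or_eq_top p⟩⟩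
  · refine ⟨?_, fun x => ⟨DirectSum.of _ 0 ⟨x, by simp⟩, by simp⟩⟩
    have hbot : ∀ j : ℤ, j ≠ 0 → ∀ y, y ∈ (if j = 0 then ⊤ else ⊥ : AddSubgroup S) → y = 0 :=
      fun j hj y hy => by rwa [if_neg hj, AddSubgroup.mem_bot] at hy
    have key : ∀ x : DirectSum ℤ fun j => ((if j = 0 then ⊤ else ⊥ : AddSubgroup S)),
        x = DirectSum.of (fun j => ((if j = 0 then ⊤ else ⊥ : AddSubgroup S))) 0 (x 0) := by
      intro x
      ext j
      rcases eq_or_ne j 0 with rfl | hj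
      · rw [DirectSum.of_eq_same]
      · rw [DirectSum.of_eq_of_ne _ _ _ hj]
        exact hbot j hj _ (x j).2
    rw [injective_iff_map_eq_zero]
    intro x hx
    rw [key x, DirectSum.coeAddMonoidHom_of] at hx
    have h0 : x 0 = 0 := Subtype.ext hx
    rw [key x, h0]
    exact map_zero _
  · rcases eq_or_ne i 0 with rfl | hi
    · simp only [zero_add]
      split_ifs with hj
      · trivial
      · have hm0 : m = 0 := by simpa [hj] using hm
        rw [hm0, smul_zero]; exact zero_mem _
    · rw [hS i hi a ha m]; exact zero_mem _

/-- If the simple `A`-modules killed by `J` have projective dimension at most `n`, then so do all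
modules over the opposite ring. -/
theorem pdLE_opposite_of_simple {A R : Type u} [Ring A] [Ring R] (e : R ≃+* Aᵐᵒᵖ)
    {J : Ideal A} [J.IsTwoSided] [IsSemisimpleRing (A ⧸ J)]
    {𝒜 : ℤ → AddSubgroup R} [GradedRing 𝒜] (hneg : ∀ i : ℤ, i < 0 → 𝒜 i = ⊥)
    {I : Ideal R} [I.IsTwoSided] [IsSemisimpleRing (R ⧸ I)]
    (hIJ : ∀ r, r ∈ I ↔ unop (e r) ∈ J)
    (hI : ∀ a ∈ I, ∀ i, GradedRing.proj 𝒜 i a ∈ I) {m : ℕ}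
    (hnil : ∀ l : List R, l.length = m → (∀ b ∈ l, b ∈ I ∧ b ∈ 𝒜 0) → l.prod = 0)
    {n : ℕ}
    (hS : ∀ (S : Type u) [AddCommGroup S] [Module A S], IsSimpleModule A S →
      (∀ a ∈ J, ∀ x : S, a • x = 0) → pdLE A n S)
    (M : Type u) [AddCommGroup M] [Module R M] : pdLE R n M :=
  pdLE_of_hasInjectiveDimensionLE hneg hI hnil
    (fun H hH => DualModule.mem_smul_of_extends e hIJ H hH)
    (DualModule.hasInjectiveDimensionLE e (pdLE_quotient_of_isSemisimpleRing hS)) M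

end Simple

section Opposite

open MulOpposite GradedRing

variable {A : Type u} [Ring A] (𝒜 : ℤ → AddSubgroup A)

/-- The grading on the opposite ring. -/
def opGrading (i : ℤ) : AddSubgroup Aᵐᵒᵖ := (𝒜 i).comap opAddEquiv.symm.toAddMonoidHom

lemma mem_opGrading {i : ℤ} {x : Aᵐᵒᵖ} : x ∈ opGrading 𝒜 i ↔ unop x ∈ 𝒜 i := Iff.rfl

lemma opGrading_eq_bot (hneg : ∀ i : ℤ, i < 0 → 𝒜 i = ⊥) (i : ℤ) (hi : i < 0) :
    opGrading 𝒜 i = ⊥ := by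
  ext x
  rw [mem_opGrading, hneg i hi, AddSubgroup.mem_bot, AddSubgroup.mem_bot, unop_eq_zero_iff]

variable [GradedRing 𝒜]

lemma isInternal_opGrading : DirectSum.IsInternal (opGrading 𝒜) := by
  have key : ∀ x : DirectSum ℤ fun i => opGrading 𝒜 i,
      unop (DirectSum.coeAddMonoidHom (opGrading 𝒜) x) =
        DirectSum.coeAddMonoidHom 𝒜
          (DirectSum.map (fun i => (⟨⟨fun y => ⟨unop y.1, y.2⟩, rfl⟩, fun _ _ => rfl⟩ :
            opGrading 𝒜 i →+ 𝒜 i)) x) := by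
    intro x
    induction x using DirectSum.induction_on with
    | zero => simp
    | of i x => simp
    | add x y hx hy => simp only [map_add, unop_add, hx, hy]
  refine ⟨?_, fun x => ?_⟩
  · rw [injective_iff_map_eq_zero]
    intro x hx
    have h1 := key x
    rw [hx, unop_zero] at h1
    have h2 := (injective_iff_map_eq_zero _).1 (DirectSum.Decomposition.isInternal 𝒜).1 _ h1.symm
    ext i
    have h3 := congrArg Subtype.val (DFunLike.congr_fun h2 i)
    rw [DirectSum.map_apply] at h3
    exact unop_injective h3
  · obtain ⟨s, -, hs⟩ := exists_sum_proj 𝒜 (unop x)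
    refine ⟨∑ i ∈ s, DirectSum.of (fun i => opGrading 𝒜 i) i
      ⟨op (proj 𝒜 i (unop x)), proj_mem 𝒜 i _⟩, unop_injective ?_⟩
    rw [map_sum, Finset.unop_sum]
    simp only [DirectSum.coeAddMonoidHom_of, unop_op, hs]

noncomputable instance : GradedRing (opGrading 𝒜) where
  one_mem := SetLike.GradedOne.one_mem (A := 𝒜)
  mul_mem i j x y hx hy := by
    rw [mem_opGrading, add_comm]
    exact SetLike.GradedMul.mul_mem (A := 𝒜) hy hx
  toDecomposition := (isInternal_opGrading 𝒜).chooseDecomposition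

end Opposite

section DegreeZero

open GradedRing MulOpposite

variable {A : Type u} [Ring A] {𝒜 : ℤ → AddSubgroup A} [GradedRing 𝒜]

lemma GradedRing.proj_zero_mul (hneg : ∀ i : ℤ, i < 0 → 𝒜 i = ⊥) (a b : A) :
    proj 𝒜 0 (a * b) = proj 𝒜 0 a * proj 𝒜 0 b := by
  obtain ⟨s, hs, ha⟩ := exists_sum_proj 𝒜 a
  conv_lhs => rw [← ha, Finset.sum_mul, map_sum]
  rw [Finset.sum_eq_single 0]
  · rw [proj_proj_mul, sub_zero]
  · intro i _ hi
    rw [proj_proj_mul]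
    rcases lt_or_gt_of_ne hi with h | h
    · rw [proj_eq_zero_of_neg 𝒜 hneg h, zero_mul]
    · rw [proj_eq_zero_of_neg 𝒜 hneg (i := 0 - i) (by omega), mul_zero]
  · intro h
    rw [hs 0 h, zero_mul, map_zero]

/-- The projection of a nonnegatively graded ring onto its degree zero part. -/
noncomputable def degreeZero (hneg : ∀ i : ℤ, i < 0 → 𝒜 i = ⊥) : A →+* 𝒜 0 where
  toFun a := ⟨proj 𝒜 0 a, proj_mem 𝒜 0 a⟩
  map_one' := Subtype.ext (by simpa using proj_one 𝒜 0)
  map_mul' a b := Subtype.ext (proj_zero_mul hneg a b)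
  map_zero' := Subtype.ext (map_zero _)
  map_add' a b := Subtype.ext (map_add _ a b)

lemma degreeZero_coe (hneg : ∀ i : ℤ, i < 0 → 𝒜 i = ⊥) (a : 𝒜 0) :
    degreeZero hneg (a : A) = a :=
  Subtype.ext ((proj_of_mem 𝒜 a.2 0).trans (if_pos rfl))

lemma degreeZero_eq_zero (hneg : ∀ i : ℤ, i < 0 → 𝒜 i = ⊥) {i : ℤ} (hi : i ≠ 0) {a : A}
    (ha : a ∈ 𝒜 i) : degreeZero hneg a = 0 :=
  Subtype.ext ((proj_of_mem 𝒜 ha 0).trans (if_neg hi))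

/-- A nonnegatively graded ring maps onto the largest semisimple quotient of its degree zero
part. -/
noncomputable def toSemisimple (hneg : ∀ i : ℤ, i < 0 → 𝒜 i = ⊥) :
    A →+* 𝒜 0 ⧸ Ring.jacobson (𝒜 0) :=
  (Ideal.Quotient.mk _).comp (degreeZero hneg)

lemma toSemisimple_surjective (hneg : ∀ i : ℤ, i < 0 → 𝒜 i = ⊥) :
    Function.Surjective (toSemisimple hneg) :=
  Ideal.Quotient.mk_surjective.comp fun a => ⟨a, degreeZero_coe hneg a⟩

lemma toSemisimple_eq_zero (hneg : ∀ i : ℤ, i < 0 → 𝒜 i = ⊥) {i : ℤ} (hi : i ≠ 0) {a : A}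
    (ha : a ∈ 𝒜 i) : toSemisimple hneg a = 0 := by
  rw [toSemisimple, RingHom.comp_apply, degreeZero_eq_zero hneg hi ha, map_zero]

lemma List.prod_mem_ideal_pow {R : Type*} [Ring R] (K : Ideal R) [K.IsTwoSided] (l : List R)
    (h : ∀ b ∈ l, b ∈ K) : l.prod ∈ K ^ l.length := by
  induction l with
  | nil => simp [Submodule.pow_zero]
  | cons b l ih =>
    rw [List.prod_cons, List.length_cons, Ideal.IsTwoSided.pow_succ]
    exact Ideal.mul_mem_mul (h b (by simp)) (ih fun c hc => h c (by simp [hc]))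

lemma exists_list_prod_eq_zero (hneg : ∀ i : ℤ, i < 0 → 𝒜 i = ⊥) [IsSemiprimaryRing (𝒜 0)] :
    ∃ m : ℕ, ∀ l : List A, l.length = m → (∀ b ∈ l, toSemisimple hneg b = 0 ∧ b ∈ 𝒜 0) →
      l.prod = 0 := by
  obtain ⟨m, hm⟩ := IsSemiprimaryRing.isNilpotent (R := 𝒜 0)
  refine ⟨m, fun l hl h => ?_⟩
  have h1 : (l.map (degreeZero hneg)).prod = 0 := by
    have := List.prod_mem_ideal_pow (Ring.jacobson (𝒜 0)) (l.map (degreeZero hneg)) fun b hb => by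
      obtain ⟨a, ha, rfl⟩ := List.mem_map.1 hb
      exact Ideal.Quotient.eq_zero_iff_mem.1 (h a ha).1
    rw [List.length_map, hl, hm] at this
    simpa using this
  rw [← map_list_prod] at h1
  have h2 : l.prod ∈ 𝒜 0 :=
    list_prod_mem (S := SetLike.GradeZero.subring 𝒜) fun b hb => (h b hb).2
  have h3 := congrArg Subtype.val (degreeZero_coe hneg ⟨l.prod, h2⟩)
  rw [h1] at h3
  exact h3.symm

lemma RingHom.isSemisimpleRing_quotient_ker {R S : Type*} [Ring R] [Ring S] [IsSemisimpleRing S]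
    {f : R →+* S} (hf : Function.Surjective f) : IsSemisimpleRing (R ⧸ RingHom.ker f) :=
  (RingHom.quotientKerEquivOfSurjective hf).symm.isSemisimpleRing

lemma GradedRing.proj_mem_ker {S : Type*} [Ring S] {f : A →+* S}
    (hf : ∀ i ≠ 0, ∀ a ∈ 𝒜 i, f a = 0) (a : A) (ha : a ∈ RingHom.ker f) (i : ℤ) :
    proj 𝒜 i a ∈ RingHom.ker f := by
  rw [RingHom.mem_ker] at ha ⊢
  rcases eq_or_ne i 0 with rfl | hi
  · obtain ⟨s, hs, hsum⟩ := exists_sum_proj 𝒜 a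
    rw [← ha]
    conv_rhs => rw [← hsum, map_sum]
    symm
    refine Finset.sum_eq_single 0 (fun i _ hi => hf i hi _ (proj_mem 𝒜 i a)) fun h => ?_
    rw [hs 0 h, map_zero]
  · exact hf i hi _ (proj_mem 𝒜 i a)

theorem pdLE_op_of_isGradedSimple (hneg : ∀ i : ℤ, i < 0 → 𝒜 i = ⊥) [IsSemiprimaryRing (𝒜 0)]
    {n : ℕ} (h : ∀ (S : Type u) [AddCommGroup S] [Module A S] (ℳ : ℤ → AddSubgroup S),
      IsGradedSimple A 𝒜 S ℳ → pdLE A n S)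
    (M : Type u) [AddCommGroup M] [Module Aᵐᵒᵖ M] : pdLE Aᵐᵒᵖ n M := by
  have := RingHom.isSemisimpleRing_quotient_ker (toSemisimple_surjective hneg)
  have := RingHom.isSemisimpleRing_quotient_ker (f := RingHom.op (toSemisimple hneg))
    fun x => ⟨op (toSemisimple_surjective hneg (unop x)).choose, unop_injective
      (toSemisimple_surjective hneg (unop x)).choose_spec⟩
  obtain ⟨m, hm⟩ := exists_list_prod_eq_zero hneg
  refine pdLE_opposite_of_simple (RingEquiv.refl Aᵐᵒᵖ) (J := RingHom.ker (toSemisimple hneg))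
    (𝒜 := opGrading 𝒜) (opGrading_eq_bot 𝒜 hneg) (I := RingHom.ker (RingHom.op (toSemisimple hneg)))
    (m := m) (fun r => ?_) (proj_mem_ker fun i hi a ha => ?_) (fun l hl hb => ?_)
    (fun S _ _ hS hJ => ?_) M
  · exact (unop_eq_zero_iff (α := 𝒜 0 ⧸ Ring.jacobson (𝒜 0)) _).symm
  · exact unop_injective (toSemisimple_eq_zero hneg hi ha)
  · refine unop_injective ?_
    rw [unop_list_prod]
    refine hm _ (by simpa using hl) fun b hb' => ?_
    obtain ⟨c, hc, rfl⟩ := List.mem_map.1 (List.mem_reverse.1 hb')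
    exact ⟨(unop_eq_zero_iff _).2 (hb c hc).1, (hb c hc).2⟩
  · obtain ⟨ℳ, hℳ⟩ := hS.exists_isGradedSimple (𝒜 := 𝒜) fun i hi a ha =>
      hJ a (toSemisimple_eq_zero hneg hi ha)
    exact h S ℳ hℳ

theorem pdLE_of_isGradedSimpleRight (hneg : ∀ i : ℤ, i < 0 → 𝒜 i = ⊥) [IsSemiprimaryRing (𝒜 0)]
    {n : ℕ} (h : ∀ (S : Type u) [AddCommGroup S] [Module Aᵐᵒᵖ S] (ℳ : ℤ → AddSubgroup S),
      IsGradedSimpleRight A 𝒜 S ℳ → pdLE Aᵐᵒᵖ n S)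
    (M : Type u) [AddCommGroup M] [Module A M] : pdLE A n M := by
  have := RingHom.isSemisimpleRing_quotient_ker (toSemisimple_surjective hneg)
  have := RingHom.isSemisimpleRing_quotient_ker (f := RingHom.op (toSemisimple hneg))
    fun x => ⟨op (toSemisimple_surjective hneg (unop x)).choose, unop_injective
      (toSemisimple_surjective hneg (unop x)).choose_spec⟩
  obtain ⟨m, hm⟩ := exists_list_prod_eq_zero hneg
  refine pdLE_opposite_of_simple (RingEquiv.opOp A)
    (J := RingHom.ker (RingHom.op (toSemisimple hneg)))
    (𝒜 := 𝒜) hneg (I := RingHom.ker (toSemisimple hneg))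
    (m := m) (fun r => (op_eq_zero_iff _).symm)
    (proj_mem_ker fun i hi a ha => toSemisimple_eq_zero hneg hi ha) hm
    (fun S _ _ hS hJ => ?_) M
  obtain ⟨ℳ, ⟨hdec, hmul⟩, hsimple⟩ := hS.exists_isGradedSimple (𝒜 := opGrading 𝒜)
    fun i hi a ha => hJ a (unop_injective (toSemisimple_eq_zero hneg hi ha))
  exact h S ℳ ⟨⟨hdec, fun i j a m ha hm => add_comm i j ▸ hmul i j (op a) m ha hm⟩, hsimple⟩

end DegreeZero

theorem stmt_0 (A : Type u) [Ring A] (𝒜 : ℤ → AddSubgroup A) [GradedRing 𝒜]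
    (hneg : ∀ i : ℤ, i < 0 → 𝒜 i = ⊥)
    (hart_left : IsArtinianRing ↥(𝒜 0)) (hart_right : IsArtinianRing (↥(𝒜 0))ᵐᵒᵖ) :
    globalDim A =
      sSup {c : ℕ∞ | ∃ (M : Type u) (_ : AddCommGroup M) (_ : Module A M)
        (ℳ : ℤ → AddSubgroup M), IsGradedSimple A 𝒜 M ℳ ∧ c = projDim A M} ∧
    globalDim A = globalDim Aᵐᵒᵖ ∧
    globalDim A =
      sSup {c : ℕ∞ | ∃ (M : Type u) (_ : AddCommGroup M) (_ : Module Aᵐᵒᵖ M)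
        (ℳ : ℤ → AddSubgroup M), IsGradedSimpleRight A 𝒜 M ℳ ∧ c = projDim Aᵐᵒᵖ M} := by
  have left_le_of_globalDim_le : ∀ n : ℕ, globalDim A ≤ n →
      sSup {c : ℕ∞ | ∃ (M : Type u) (_ : AddCommGroup M) (_ : Module A M)
        (ℳ : ℤ → AddSubgroup M), IsGradedSimple A 𝒜 M ℳ ∧ c = projDim A M} ≤ n := by
    rintro n h
    refine sSup_le ?_
    rintro _ ⟨M, _, _, ℳ, -, rfl⟩
    exact projDim_le_iff.2 (globalDim_le_iff.1 h M)
  have op_le_of_left_le : ∀ n : ℕ,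
      sSup {c : ℕ∞ | ∃ (M : Type u) (_ : AddCommGroup M) (_ : Module A M)
        (ℳ : ℤ → AddSubgroup M), IsGradedSimple A 𝒜 M ℳ ∧ c = projDim A M} ≤ n →
      globalDim Aᵐᵒᵖ ≤ n := fun n h =>
    globalDim_le_iff.2 <| pdLE_op_of_isGradedSimple hneg fun S _ _ ℳ hS =>
      projDim_le_iff.1 (sSup_le_iff.1 h _ ⟨S, _, _, ℳ, hS, rfl⟩)
  have right_le_of_op_le : ∀ n : ℕ, globalDim Aᵐᵒᵖ ≤ n →
      sSup {c : ℕ∞ | ∃ (M : Type u) (_ : AddCommGroup M) (_ : Module Aᵐᵒᵖ M)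
        (ℳ : ℤ → AddSubgroup M), IsGradedSimpleRight A 𝒜 M ℳ ∧ c = projDim Aᵐᵒᵖ M} ≤ n := by
    rintro n h
    refine sSup_le ?_
    rintro _ ⟨M, _, _, ℳ, -, rfl⟩
    exact projDim_le_iff.2 (globalDim_le_iff.1 h M)
  have le_of_right_le : ∀ n : ℕ,
      sSup {c : ℕ∞ | ∃ (M : Type u) (_ : AddCommGroup M) (_ : Module Aᵐᵒᵖ M)
        (ℳ : ℤ → AddSubgroup M), IsGradedSimpleRight A 𝒜 M ℳ ∧ c = projDim Aᵐᵒᵖ M} ≤ n →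
      globalDim A ≤ n := fun n h =>
    globalDim_le_iff.2 <| pdLE_of_isGradedSimpleRight hneg fun S _ _ ℳ hS =>
      projDim_le_iff.1 (sSup_le_iff.1 h _ ⟨S, _, _, ℳ, hS, rfl⟩)
  refine ⟨ENat.eq_of_forall_natCast_le fun n => ⟨left_le_of_globalDim_le n, fun h => ?_⟩,
    ENat.eq_of_forall_natCast_le fun n => ⟨fun h => ?_, fun h => ?_⟩,
    ENat.eq_of_forall_natCast_le fun n => ⟨fun h => ?_, le_of_right_le n⟩⟩
  · exact le_of_right_le n (right_le_of_op_le n (op_le_of_left_le n h))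
  · exact op_le_of_left_le n (left_le_of_globalDim_le n h)
  · exact le_of_right_le n (right_le_of_op_le n h)
  · exact right_le_of_op_le n (op_le_of_left_le n (left_le_of_globalDim_le n h))
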